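/- For every integer n ≥ 2, the node reliability polynomial of the cycle graph C_{2n+1} evaluated at the real number p = 2n² is strictly positive: NRel(C_{2n+1}; 2n²) > 0. -/

import Mathlib

open scoped Classical

/-- The node reliability polynomial of `G` at a real argument `p`: the sum over all
connected sets `S` of `p^|S| * (1-p)^(N-|S|)`. -/
noncomputable def nodeRelR {V : Type*} [Fintype V] (G : SimpleGraph V) (p : ℝ) : ℝ :=
  ∑ S ∈ Finset.univ.filter fun S : Finset V => (G.induce (S : Set V)).Connected,
    p ^ S.card * (1 - p) ^ (Fintype.card V - S.card)

/-!
The connected sets of a cycle on `N` vertices are the whole cycle and, for each `1 ≤ k < N`, the `N`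
arcs of length `k`. For odd `N`, summing the resulting geometric series gives, with `q = p - 1`,
`(2p - 1) NRel(C_N; p) = (2p - 1) p^N + N (p q^N - q p^N)`.
Since `p - q = 1`, the inequality `(p + q) (p^N - q^N) < N (p - q) (p^N + q^N)` bounds `q^N` below
by a multiple of `p^N`, which makes the right-hand side positive as soon as `p + q ≥ N (N - 2)`.
For `N = 2n + 1` this condition is exactly `p ≥ 2n²`.
-/

open Finset SimpleGraph

theorem subset_of_connected_induce {V : Type*} {G : SimpleGraph V} {S T : Set V}
    (hS : (G.induce S).Connected) (hST : (S ∩ T).Nonempty)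
    (hT : ∀ u ∈ T, ∀ v ∈ S, G.Adj u v → v ∈ T) : S ⊆ T := by
  intro v hvS
  by_contra hvT
  obtain ⟨u, huS, huT⟩ := hST
  obtain ⟨w⟩ := hS.preconnected ⟨u, huS⟩ ⟨v, hvS⟩
  obtain ⟨d, -, hd_fst, hd_snd⟩ := w.exists_boundary_dart (Subtype.val ⁻¹' T) huT hvT
  exact hd_snd (hT _ hd_fst _ d.snd.2 d.adj)

section Arc

variable {A : Type*} [AddCommGroup A] {g a b : A} {k l : ℕ} {S : Finset A}

/-- The arithmetic progression `a, a + g, …, a + (k - 1) • g`. When `g` generates a finite group,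
`circulantGraph {g}` is a cycle and this is the arc with `k` vertices that starts at `a`. -/
noncomputable def arc (g a : A) (k : ℕ) : Finset A :=
  (range k).image fun i ↦ a + i • g

theorem mem_arc {x : A} : x ∈ arc g a k ↔ ∃ i < k, a + i • g = x := by
  simp [arc]

theorem left_mem_arc (hk : k ≠ 0) : a ∈ arc g a k :=
  mem_arc.2 ⟨0, by omega, by simp⟩

theorem card_arc (hk : k ≤ addOrderOf g) : #(arc g a k) = k := by
  have h_inj : Set.InjOn (fun i : ℕ ↦ a + i • g) (range k) := fun i hi j hj hij ↦
    nsmul_injOn_Iio_addOrderOf ((mem_range.1 hi).trans_le hk) ((mem_range.1 hj).trans_le hk)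
      (add_left_cancel hij)
  rw [arc, card_image_of_injOn h_inj, card_range]

theorem sub_notMem_arc (hk : k < addOrderOf g) : a - g ∉ arc g a k := by
  intro h_mem
  obtain ⟨i, hi, h_eq⟩ := mem_arc.1 h_mem
  have h_zero : (i + 1) • g = 0 := by
    rw [sub_eq_add_neg, add_right_inj] at h_eq
    rw [succ_nsmul, h_eq, neg_add_cancel]
  exact nsmul_ne_zero_of_lt_addOrderOf i.succ_ne_zero (by omega) h_zero

/-- The start of a proper arc is its only element `x` with `x - g` outside the arc. -/
theorem arc_inj (hk₀ : k ≠ 0) (hk : k < addOrderOf g) (hl : l < addOrderOf g)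
    (h : arc g a k = arc g b l) : a = b ∧ k = l := by
  refine ⟨?_, by rw [← card_arc (a := a) hk.le, h, card_arc hl.le]⟩
  obtain ⟨i, hi, rfl⟩ := mem_arc.1 (h ▸ left_mem_arc hk₀ : a ∈ arc g b l)
  cases i with
  | zero => simp
  | succ i =>
    refine absurd ?_ (sub_notMem_arc (a := b + (i + 1) • g) hk)
    rw [h]
    exact mem_arc.2 ⟨i, by omega, by rw [succ_nsmul]; abel⟩

theorem connected_induce_arc (hk : k ≠ 0) :
    ((circulantGraph {g}).induce (arc g a k : Set A)).Connected := by
  rw [connected_iff_exists_forall_reachable]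
  refine ⟨⟨a, left_mem_arc hk⟩, ?_⟩
  rintro ⟨x, hx⟩
  obtain ⟨i, hi, rfl⟩ := mem_arc.1 (mem_coe.1 hx)
  induction i with
  | zero => simp
  | succ i ih =>
    have hi' : a + i • g ∈ arc g a k := mem_arc.2 ⟨i, by omega, rfl⟩
    refine (ih (by omega) hi').trans ?_
    rcases eq_or_ne g 0 with rfl | hg
    · simp
    · exact Adj.reachable (by simp [succ_nsmul, hg])

theorem eq_arc_of_connected_induce (hS : ((circulantGraph {g}).induce (S : Set A)).Connected)
    (hk : k ≠ 0) (h_arc : ∀ i < k, a + i • g ∈ S) (h_left : a - g ∉ S)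
    (h_right : a + k • g ∉ S) : S = arc g a k := by
  have h_sub : arc g a k ⊆ S := fun x hx ↦ by
    obtain ⟨i, hi, rfl⟩ := mem_arc.1 hx
    exact h_arc i hi
  refine Subset.antisymm (coe_subset.1 <| subset_of_connected_induce hS
    ⟨a, h_sub (left_mem_arc hk), left_mem_arc hk⟩ fun u hu v hv huv ↦ ?_) h_sub
  obtain ⟨i, hi, rfl⟩ := mem_arc.1 (mem_coe.1 hu)
  rcases huv.2 with h_prev | h_next
  · obtain rfl : v = a + i • g - g := eq_sub_of_add_eq' (sub_eq_iff_eq_add.1 h_prev).symm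
    cases i with
    | zero => exact absurd (by simpa using hv) h_left
    | succ i => exact mem_arc.2 ⟨i, by omega, by rw [succ_nsmul]; abel⟩
  · obtain rfl : v = a + (i + 1) • g := by rw [sub_eq_iff_eq_add.1 h_next, succ_nsmul]; abel
    have h_ne : i + 1 ≠ k := fun h_eq ↦ h_right (h_eq ▸ hv)
    exact mem_arc.2 ⟨i + 1, by omega, rfl⟩

theorem exists_mem_sub_notMem [Fintype A] (hg : ∀ x, x ∈ AddSubgroup.zmultiples g)
    (h_nonempty : S.Nonempty) (h_univ : S ≠ univ) : ∃ a ∈ S, a - g ∉ S := by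
  by_contra! h_closed
  obtain ⟨s, hs⟩ := h_nonempty
  have h_mem (i : ℕ) : s - i • g ∈ S := by
    induction i with
    | zero => simpa using hs
    | succ i ih => simpa only [succ_nsmul, sub_sub] using h_closed _ ih
  refine h_univ (eq_univ_of_forall fun x ↦ ?_)
  obtain ⟨i, hi⟩ := mem_multiples_iff_mem_zmultiples.2 (hg (s - x))
  simpa [show i • g = s - x from hi] using h_mem i

theorem exists_eq_arc_of_connected_induce [Fintype A] (hg : ∀ x, x ∈ AddSubgroup.zmultiples g)
    (hS : ((circulantGraph {g}).induce (S : Set A)).Connected) (h_univ : S ≠ univ) :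
    ∃ a, ∃ k ∈ Ico 1 (addOrderOf g), arc g a k = S := by
  obtain ⟨⟨s, hs⟩⟩ := hS.nonempty
  obtain ⟨a, ha, h_left⟩ := exists_mem_sub_notMem hg ⟨s, hs⟩ h_univ
  have h_last : a + (addOrderOf g - 1) • g ∉ S := by
    rwa [sub_nsmul _ (addOrderOf_pos g), addOrderOf_nsmul_eq_zero, one_nsmul, zero_add,
      ← sub_eq_add_neg]
  have h_exit : ∃ k, a + k • g ∉ S := ⟨_, h_last⟩
  have h_pos : Nat.find h_exit ≠ 0 := fun h_zero ↦ (Nat.find_eq_zero h_exit).1 h_zero (by simpa)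
  have h_lt : Nat.find h_exit < addOrderOf g :=
    (Nat.find_min' h_exit h_last).trans_lt (Nat.sub_one_lt (addOrderOf_pos g).ne')
  refine ⟨a, Nat.find h_exit, mem_Ico.2 ⟨Nat.one_le_iff_ne_zero.2 h_pos, h_lt⟩, ?_⟩
  exact (eq_arc_of_connected_induce hS h_pos
    (fun i hi ↦ not_not.1 (Nat.find_min h_exit hi)) h_left (Nat.find_spec h_exit)).symm

theorem connected_induce_circulantGraph_iff [Fintype A]
    (hg : ∀ x, x ∈ AddSubgroup.zmultiples g) :
    ((circulantGraph {g}).induce (S : Set A)).Connected ↔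
      S = univ ∨ ∃ a, ∃ k ∈ Ico 1 (addOrderOf g), arc g a k = S := by
  constructor
  · intro hS
    exact or_iff_not_imp_left.2 (exists_eq_arc_of_connected_induce hg hS)
  · rintro (rfl | ⟨a, k, hk, rfl⟩)
    · have h_univ : univ = arc g 0 (addOrderOf g) := by
        rw [eq_comm, ← card_eq_iff_eq_univ, card_arc le_rfl,
          addOrderOf_eq_card_of_forall_mem_zmultiples hg, Nat.card_eq_fintype_card]
      rw [h_univ]
      exact connected_induce_arc (addOrderOf_pos g).ne'
    · exact connected_induce_arc (Nat.one_le_iff_ne_zero.1 (mem_Ico.1 hk).1)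

theorem sum_image_arc [Fintype A] {M : Type*} [AddCommMonoid M] (f : ℕ → M) :
    ∑ S ∈ (univ ×ˢ Ico 1 (addOrderOf g)).image (fun q : A × ℕ ↦ arc g q.1 q.2), f #S =
      Fintype.card A • ∑ k ∈ Ico 1 (addOrderOf g), f k := by
  have h_inj : Set.InjOn (fun q : A × ℕ ↦ arc g q.1 q.2)
      (univ ×ˢ Ico 1 (addOrderOf g) : Finset (A × ℕ)) := by
    rintro ⟨a, k⟩ hk ⟨b, l⟩ hl h_eq
    simp only [coe_product, coe_univ, coe_Ico, Set.mem_prod, Set.mem_univ, Set.mem_Ico,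
      true_and] at hk hl
    exact Prod.ext_iff.2 (arc_inj (by omega) hk.2 hl.2 h_eq)
  have h_card (a : A) : ∑ k ∈ Ico 1 (addOrderOf g), f #(arc g a k) =
      ∑ k ∈ Ico 1 (addOrderOf g), f k :=
    sum_congr rfl fun k hk ↦ by rw [card_arc (mem_Ico.1 hk).2.le]
  rw [sum_image h_inj, sum_product]
  simp only [h_card, sum_const, card_univ]

theorem nodeRelR_circulantGraph [Fintype A] (hg : ∀ x, x ∈ AddSubgroup.zmultiples g) (p : ℝ) :
    nodeRelR (circulantGraph {g}) p = p ^ Fintype.card A +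
      Fintype.card A * ∑ k ∈ Ico 1 (Fintype.card A), p ^ k * (1 - p) ^ (Fintype.card A - k) := by
  have h_order : addOrderOf g = Fintype.card A := by
    rw [addOrderOf_eq_card_of_forall_mem_zmultiples hg, Nat.card_eq_fintype_card]
  let arcs : Finset (Finset A) :=
    (univ ×ˢ Ico 1 (addOrderOf g)).image fun q : A × ℕ ↦ arc g q.1 q.2
  have h_univ : univ ∉ arcs := by
    intro h_mem
    obtain ⟨⟨a, k⟩, hk, h_eq⟩ := mem_image.1 h_mem
    exact sub_notMem_arc (mem_Ico.1 (mem_product.1 hk).2).2 (h_eq ▸ mem_univ (a - g))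
  calc nodeRelR (circulantGraph {g}) p
      = ∑ S ∈ insert univ arcs, p ^ #S * (1 - p) ^ (Fintype.card A - #S) := by
        refine sum_congr ?_ fun _ _ ↦ rfl
        ext S
        simp [connected_induce_circulantGraph_iff hg, arcs]
    _ = _ := by
        rw [sum_insert h_univ, sum_image_arc fun k ↦ p ^ k * (1 - p) ^ (Fintype.card A - k),
          h_order, nsmul_eq_mul]
        simp

end Arc

theorem nodeRelR_cycleGraph (m : ℕ) (p : ℝ) :
    nodeRelR (cycleGraph (m + 1)) p =
      p ^ (m + 1) + (m + 1) * ∑ k ∈ Ico 1 (m + 1), p ^ k * (1 - p) ^ (m + 1 - k) := by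
  have h_gen (x : Fin (m + 1)) : x ∈ AddSubgroup.zmultiples (1 : Fin (m + 1)) := by
    induction x using Fin.induction with
    | zero => exact zero_mem _
    | succ i ih => exact Fin.coeSucc_eq_succ ▸ add_mem ih (AddSubgroup.mem_zmultiples 1)
  simpa [cycleGraph_eq_circulantGraph] using nodeRelR_circulantGraph h_gen p

theorem sub_mul_sum_Ico_pow_mul_pow {R : Type*} [CommRing R] (x y : R) {N : ℕ} (hN : 1 ≤ N) :
    (x - y) * ∑ k ∈ Ico 1 N, x ^ k * y ^ (N - k) = y * x ^ N - x * y ^ N := by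
  have h_factor : ∑ k ∈ Ico 1 N, x ^ k * y ^ (N - k) =
      y * ∑ k ∈ Ico 1 N, x ^ k * y ^ (N - 1 - k) := by
    rw [mul_sum]
    refine sum_congr rfl fun k hk ↦ ?_
    rw [show N - k = N - 1 - k + 1 by grind]
    ring
  rw [h_factor, mul_left_comm, mul_geom_sum₂_Ico x y hN]
  obtain ⟨m, rfl⟩ := Nat.exists_eq_add_of_le' hN
  simp only [add_tsub_cancel_right]
  ring

/-- For `y = x * exp (-2 * u)` with `u > 0` this says `tanh (k * u) < k * tanh u`. -/
theorem add_mul_pow_sub_pow_lt {R : Type*} [CommRing R] [LinearOrder R] [IsStrictOrderedRing R]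
    {x y : R} (hy : 0 ≤ y) (hxy : y < x) {k : ℕ} (hk : 2 ≤ k) :
    (x + y) * (x ^ k - y ^ k) < k * (x - y) * (x ^ k + y ^ k) := by
  induction k, hk using Nat.le_induction with
  | base =>
    have h_cube : 0 < (x - y) ^ 3 := pow_pos (sub_pos.2 hxy) 3
    push_cast
    linarith
  | succ k _ ih =>
    have h_sum : 0 < x + y := by linarith
    have h_diff : 0 ≤ x ^ k - y ^ k := sub_nonneg.2 (pow_le_pow_left₀ hy hxy.le k)
    have h_ih := mul_lt_mul_of_pos_left ih h_sum
    have h_extra : 0 ≤ (k + 1) * (x - y) ^ 2 * (x ^ k - y ^ k) := by positivity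
    rw [pow_succ x, pow_succ y]
    push_cast
    linarith

theorem two_mul_sub_one_mul_nodeRelR_cycleGraph (n : ℕ) (p : ℝ) :
    (2 * p - 1) * nodeRelR (cycleGraph (2 * n + 1)) p = (2 * p - 1) * p ^ (2 * n + 1) +
      (2 * n + 1) * (p * (p - 1) ^ (2 * n + 1) - (p - 1) * p ^ (2 * n + 1)) := by
  have h_geom := sub_mul_sum_Ico_pow_mul_pow p (1 - p) (N := 2 * n + 1) (by omega)
  have h_neg : (1 - p) ^ (2 * n + 1) = -(p - 1) ^ (2 * n + 1) := by
    rw [← neg_sub p 1, (odd_two_mul_add_one n).neg_pow]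
  rw [h_neg] at h_geom
  rw [nodeRelR_cycleGraph]
  push_cast
  linear_combination (2 * n + 1 : ℝ) * h_geom

theorem cycle_nodeRel_pos_at_general {n : ℕ} (hn : 1 ≤ n) {p : ℝ} (hp : 2 * (n : ℝ) ^ 2 ≤ p) :
    0 < nodeRelR (cycleGraph (2 * n + 1)) p := by
  have hn_cast : (1 : ℝ) ≤ n := by exact_mod_cast hn
  have hp_one : 1 < p := by nlinarith
  have h_tanh := add_mul_pow_sub_pow_lt (sub_nonneg.2 hp_one.le) (sub_one_lt p)
    (show 2 ≤ 2 * n + 1 by omega)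
  have h_closed := two_mul_sub_one_mul_nodeRelR_cycleGraph n p
  push_cast at h_tanh
  set P := p ^ (2 * n + 1)
  set Q := (p - 1) ^ (2 * n + 1)
  set R := nodeRelR (cycleGraph (2 * n + 1)) p
  have h_split : (2 * p + 2 * n) * ((2 * p - 1) * R) =
      (2 * n + 1) * p * ((2 * n + 1) * (P + Q) - (2 * p - 1) * (P - Q)) +
        2 * (2 * p - 1) * P * (p - 2 * n ^ 2) := by
    rw [h_closed]
    ring
  have h_factor : 0 < 2 * p - 1 := by linarith
  have h_gap : 0 < (2 * n + 1) * (P + Q) - (2 * p - 1) * (P - Q) := by linarith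
  have h_pos : 0 < (2 * p + 2 * n) * ((2 * p - 1) * R) := by
    rw [h_split]
    exact add_pos_of_pos_of_nonneg (by positivity)
      (mul_nonneg (by positivity) (sub_nonneg.2 hp))
  exact pos_of_mul_pos_right (pos_of_mul_pos_right h_pos (by positivity)) h_factor.le

/-- For every n ≥ 2, the node reliability polynomial of the odd cycle C_{2n+1}
is strictly positive at p = 2n². -/
theorem cycle_nodeRel_pos_at :
    ∀ n : ℕ, 2 ≤ n →
      0 < nodeRelR (SimpleGraph.cycleGraph (2 * n + 1)) (2 * (n : ℝ) ^ 2) := by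
  intro n hn
  exact cycle_nodeRel_pos_at_general (by omega) le_rfl
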